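/- For every generator s ∈ S and every word v ∈ ℤ^m with s(v) ≠ v, the words v and s(v) differ in exactly one coordinate, the differing coordinate of s(v) exceeds that of v by 1, and the section s|_v is the identity automorphism (so that s(vi) = s(v)i for every letter i ∈ ℤ). -/

import Mathlib

/-- States of the kneading automaton: `a i` is the paper's `a_{i+1}` (for `i < k`),
`b i` is the paper's `b_{i+1}` (for `i < p`), and `id` is the identity state. -/
inductive KState : Type
  | a (i : ℕ)
  | b (i : ℕ)
  | id
  deriving DecidableEq

/-- Transition function of the kneading automaton `𝒦(x₁…x_k, y₁…y_p)`, where the paper's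
`x_i` is `x (i-1)` and `y_i` is `y (i-1)`.  `KTrans k p x y s z = (output letter, restriction)`. -/
def KTrans (k p : ℕ) (x y : ℕ → ℤ) : KState → ℤ → ℤ × KState
  | .a 0, z => (z + 1, .id)
  | .a (i+1), z => if z = x i then (z, .a i) else (z, .id)
  | .b 0, z =>
      if z = x (k-1) then (z, .a (k-1))
      else if z = y (p-1) then (z, .b (p-1))
      else (z, .id)
  | .b (i+1), z => if z = y i then (z, .b i) else (z, .id)
  | .id, z => (z, .id)

/-- The action of a state on the tree `ℤ*` of finite words over `ℤ`,
defined recursively by `q(zv) = q(z)·(q|_z)(v)`. -/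
def stateAct (k p : ℕ) (x y : ℕ → ℤ) : KState → List ℤ → List ℤ
  | _, [] => []
  | s, z :: v => (KTrans k p x y s z).1 :: stateAct k p x y (KTrans k p x y s z).2 v

/-- The generating states `S = {a₁,…,a_k, b₁,…,b_p}`. -/
def IsGen (k p : ℕ) (s : KState) : Prop :=
  (∃ i, i < k ∧ s = .a i) ∨ (∃ j, j < p ∧ s = .b j)

/-- The generators of the kneading group, as permutations of `List ℤ` whose underlying
function is the action of a generating state. -/
def SGens (k p : ℕ) (x y : ℕ → ℤ) : Set (Equiv.Perm (List ℤ)) :=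
  {g | ∃ s : KState, IsGen k p s ∧ ⇑g = stateAct k p x y s}

/-- The kneading group `K = 𝕂(x₁…x_k, y₁…y_p)`. -/
def Kgroup (k p : ℕ) (x y : ℕ → ℤ) : Subgroup (Equiv.Perm (List ℤ)) :=
  Subgroup.closure (SGens k p x y)

/-!
The only transition that changes its letter is that of `a₁`, which adds `1` and moves to the
identity state. Reading a word therefore changes at most one letter, and after a change the
automaton stays in the identity state.
-/

/-- The restriction `s|_v` as a state of the automaton: the state reached from `s` after reading
the word `v`. Its action on words is the section at `v` of the automorphism induced by `s`. -/
def KState.restrict (k p : ℕ) (x y : ℕ → ℤ) (s : KState) (v : List ℤ) : KState :=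
  v.foldl (fun t z => (KTrans k p x y t z).2) s

section KneadingAutomaton

variable {k p : ℕ} {x y : ℕ → ℤ}

theorem KTrans_eq_of_fst_ne {s : KState} {z : ℤ} (h : (KTrans k p x y s z).1 ≠ z) :
    KTrans k p x y s z = (z + 1, .id) := by
  rcases s with (_ | i) | (_ | j) | _ <;> grind [KTrans]

theorem stateAct_id (v : List ℤ) : stateAct k p x y .id v = v := by
  induction v with
  | nil => rfl
  | cons z v ih => exact congrArg (z :: ·) ih

theorem KState.restrict_id (v : List ℤ) : KState.restrict k p x y .id v = .id := by
  induction v with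
  | nil => rfl
  | cons _ _ ih => exact ih

theorem stateAct_append (s : KState) (v w : List ℤ) :
    stateAct k p x y s (v ++ w) =
      stateAct k p x y s v ++ stateAct k p x y (s.restrict k p x y v) w := by
  induction v generalizing s with
  | nil => rfl
  | cons z v ih => exact congrArg ((KTrans k p x y s z).1 :: ·) (ih _)

theorem stateAct_cons_ne_iff_of_fst_eq {s : KState} {z : ℤ} {v : List ℤ}
    (h : (KTrans k p x y s z).1 = z) :
    stateAct k p x y s (z :: v) ≠ z :: v ↔ stateAct k p x y (KTrans k p x y s z).2 v ≠ v := by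
  simp [stateAct, h]

theorem KState.restrict_eq_id_of_stateAct_ne {s : KState} {v : List ℤ}
    (h : stateAct k p x y s v ≠ v) : s.restrict k p x y v = .id := by
  induction v generalizing s with
  | nil => exact absurd rfl h
  | cons z v ih =>
    change KState.restrict k p x y (KTrans k p x y s z).2 v = .id
    by_cases hz : (KTrans k p x y s z).1 = z
    · exact ih ((stateAct_cons_ne_iff_of_fst_eq hz).mp h)
    · rw [KTrans_eq_of_fst_ne hz, KState.restrict_id]

theorem exists_stateAct_eq_set_of_ne {s : KState} {v : List ℤ} (h : stateAct k p x y s v ≠ v) :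
    ∃ j < v.length, stateAct k p x y s v = v.set j (v.getD j 0 + 1) := by
  induction v generalizing s with
  | nil => exact absurd rfl h
  | cons z v ih =>
    by_cases hz : (KTrans k p x y s z).1 = z
    · obtain ⟨j, hj, hset⟩ := ih ((stateAct_cons_ne_iff_of_fst_eq hz).mp h)
      refine ⟨j + 1, Nat.succ_lt_succ hj, ?_⟩
      rw [stateAct, hz, hset, List.set_cons_succ, List.getD_cons_succ]
    · refine ⟨0, Nat.zero_lt_succ _, ?_⟩
      rw [stateAct, KTrans_eq_of_fst_ne hz, stateAct_id, List.set_cons_zero, List.getD_cons_zero]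

theorem stateAct_append_of_ne {s : KState} {v : List ℤ} (h : stateAct k p x y s v ≠ v)
    (w : List ℤ) : stateAct k p x y s (v ++ w) = stateAct k p x y s v ++ w := by
  rw [stateAct_append, KState.restrict_eq_id_of_stateAct_ne h, stateAct_id]

end KneadingAutomaton

theorem stmt18 (k p : ℕ) (hk : 1 ≤ k) (hp : 1 ≤ p) (x y : ℕ → ℤ)
    (hxy : x (k - 1) ≠ y (p - 1)) :
    ∀ (s : KState) (v : List ℤ), IsGen k p s → stateAct k p x y s v ≠ v →
      (∃ j : ℕ, j < v.length ∧
        stateAct k p x y s v = v.set j (v.getD j 0 + 1)) ∧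
      (∀ w : List ℤ, stateAct k p x y s (v ++ w) = stateAct k p x y s v ++ w) := by
  intro s v _ hne
  exact ⟨exists_stateAct_eq_set_of_ne hne, stateAct_append_of_ne hne⟩
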